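/- Let d > 0 and b ∈ ℝ with b ≠ 0. There exists a constant C ≥ 1, depending only on d and b, such that the following holds for all t ≥ 0 and η ∈ (0,1]: if w₁(·,s), w₂(·,s), w₃(·,s) ∈ W^{1,1}(ℝ,ℂ) for each s ∈ [0,t] with s ↦ w_i(·,s) measurable, and ‖w_i(·,s)‖_{L¹} ≤ η (1+s)^{−1/2} and ‖∂_k w_i(·,s)‖_{L¹} ≤ η for i = 1,2,3 and all s ∈ [0,t], then for a ∈ {0,1}: ∫_ℝ |k|^a | ∫_0^t ∫_ℝ ∫_ℝ e^{−d k² (t−s) + i b ζ s} w₁(k−ξ, s) w₂(ξ−ζ, s) w₃(ζ, s) dζ dξ ds | dk ≤ C η³ (1+t)^{−(1+a)/2}. -/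

import Mathlib

open MeasureTheory Real

noncomputable section

/-- `v'` is the weak derivative of `v : ℝ → ℂ`. -/
def HasWeakDeriv (v v' : ℝ → ℂ) : Prop :=
  LocallyIntegrable v volume ∧ LocallyIntegrable v' volume ∧
    ∀ φ : ℝ → ℝ, ContDiff ℝ (⊤ : ℕ∞) φ → HasCompactSupport φ →
      ∫ k, Complex.ofReal (deriv φ k) * v k = -∫ k, Complex.ofReal (φ k) * v' k

/-- `e^{x + iy}` for real `x, y`. -/
def expc (x y : ℝ) : ℂ := Complex.exp (Complex.ofReal x + Complex.ofReal y * Complex.I)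

open Set Filter Topology
open scoped ENNReal

/-- The antiderivative vanishing at `-∞` of a smooth compactly supported function, minus its
translate, is a test function. -/
lemma contDiff_hasCompactSupport_primitive_sub {ψ : ℝ → ℝ} (hψ : ContDiff ℝ (⊤ : ℕ∞) ψ)
    (hc : HasCompactSupport ψ) (T : ℝ) :
    ContDiff ℝ (⊤ : ℕ∞) (fun x => ∫ y in (x - T)..x, ψ y) ∧
      HasCompactSupport (fun x => ∫ y in (x - T)..x, ψ y) ∧
      deriv (fun x => ∫ y in (x - T)..x, ψ y) = fun x => ψ x - ψ (x - T) := by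
  have hcont : Continuous ψ := hψ.continuous
  have hder : ∀ x, HasDerivAt (fun x => ∫ y in (x - T)..x, ψ y) (ψ x - ψ (x - T)) x := by
    intro x
    have h1 := (hcont.integral_hasStrictDerivAt 0 x).hasDerivAt
    have h2 := (hcont.integral_hasStrictDerivAt 0 (x - T)).hasDerivAt.comp_sub_const x T
    refine (h1.sub h2).congr_of_eventuallyEq (Eventually.of_forall fun z => ?_)
    exact (intervalIntegral.integral_interval_sub_left (hcont.intervalIntegrable _ _)
      (hcont.intervalIntegrable _ _)).symm
  have hd : deriv (fun x => ∫ y in (x - T)..x, ψ y) = fun x => ψ x - ψ (x - T) :=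
    funext fun x => (hder x).deriv
  refine ⟨?_, ?_, hd⟩
  · rw [contDiff_infty_iff_deriv, hd]
    exact ⟨fun x => (hder x).differentiableAt, hψ.sub (hψ.comp (contDiff_id.sub contDiff_const))⟩
  · obtain ⟨R, hR⟩ := hc.isCompact.isBounded.subset_closedBall 0
    refine HasCompactSupport.intro (isCompact_closedBall (0 : ℝ) (R + |T|)) fun x hx => ?_
    rw [intervalIntegral.integral_congr (g := fun _ => 0), intervalIntegral.integral_zero]
    intro y hy
    by_contra hne
    have hy' := hR (subset_tsupport ψ hne)
    simp only [Metric.mem_closedBall, dist_zero_right, Real.norm_eq_abs] at hx hy'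
    apply hx
    have : |x - y| ≤ |T| := by
      rw [mem_uIcc] at hy
      rcases abs_cases T with ⟨h, _⟩ | ⟨h, _⟩ <;> rw [h, abs_le] <;>
        rcases hy with hy | hy <;> constructor <;> linarith
    calc |x| = |y + (x - y)| := by congr 1; ring
      _ ≤ |y| + |x - y| := abs_add_le _ _
      _ ≤ R + |T| := by linarith

/-- An integrable function with integrable weak derivative pairs with test functions as the
antiderivative of its weak derivative does. -/
lemma HasWeakDeriv.integral_smul_eq {v v' : ℝ → ℂ} (h : HasWeakDeriv v v')
    (hv : Integrable v) (hv' : Integrable v') {ψ : ℝ → ℝ} (hψ : ContDiff ℝ (⊤ : ℕ∞) ψ)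
    (hc : HasCompactSupport ψ) :
    ∫ x, (ψ x : ℂ) * v x = -∫ x, ((∫ y in Iic x, ψ y : ℝ) : ℂ) * v' x := by
  have hcont : Continuous ψ := hψ.continuous
  have hint : Integrable ψ := hcont.integrable_of_hasCompactSupport hc
  obtain ⟨M, hM⟩ := hcont.bounded_above_of_compact_support hc
  obtain ⟨R, hR⟩ := hc.isCompact.isBounded.subset_closedBall 0
  have hzero : ∀ y, y < -R → ψ y = 0 := by
    intro y hy
    by_contra hne
    have hy' := hR (subset_tsupport ψ hne)
    simp only [Metric.mem_closedBall, dist_zero_right, Real.norm_eq_abs] at hy'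
    linarith [(abs_le.1 hy').1]
  have hev : ∀ x : ℝ, ∀ᶠ n : ℕ in atTop, x - n < -R := by
    intro x
    filter_upwards [eventually_gt_atTop ⌈x + R⌉₊] with n hn
    have := Nat.lt_of_ceil_lt hn
    linarith
  have hid : ∀ n : ℕ, ∫ x, ((ψ x - ψ (x - n) : ℝ) : ℂ) * v x
      = -∫ x, ((∫ y in (x - n)..x, ψ y : ℝ) : ℂ) * v' x := by
    intro n
    obtain ⟨h1, h2, h3⟩ := contDiff_hasCompactSupport_primitive_sub hψ hc n
    have := h.2.2 _ h1 h2
    rwa [h3] at this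
  have hleft : Tendsto (fun n : ℕ => ∫ x, ((ψ x - ψ (x - n) : ℝ) : ℂ) * v x) atTop
      (𝓝 (∫ x, (ψ x : ℂ) * v x)) := by
    refine tendsto_integral_of_dominated_convergence (fun x => (M + M) * ‖v x‖) ?_
      (hv.norm.const_mul _) ?_ ?_
    · intro n
      exact (Continuous.aestronglyMeasurable (by fun_prop)).mul hv.aestronglyMeasurable
    · intro n
      refine Eventually.of_forall fun x => ?_
      rw [norm_mul, Complex.norm_real]
      gcongr
      exact (norm_sub_le _ _).trans (add_le_add (hM _) (hM _))
    · refine Eventually.of_forall fun x => tendsto_const_nhds.congr' ?_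
      filter_upwards [hev x] with n hn
      rw [hzero _ hn, sub_zero]
  have hright : Tendsto (fun n : ℕ => ∫ x, ((∫ y in (x - n)..x, ψ y : ℝ) : ℂ) * v' x) atTop
      (𝓝 (∫ x, ((∫ y in Iic x, ψ y : ℝ) : ℂ) * v' x)) := by
    refine tendsto_integral_of_dominated_convergence (fun x => (∫ y, ‖ψ y‖) * ‖v' x‖) ?_
      (hv'.norm.const_mul _) ?_ ?_
    · intro n
      have := (contDiff_hasCompactSupport_primitive_sub hψ hc n).1.continuous
      exact (Complex.continuous_ofReal.comp this).aestronglyMeasurable.mul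
        hv'.aestronglyMeasurable
    · intro n
      refine Eventually.of_forall fun x => ?_
      rw [norm_mul, Complex.norm_real]
      gcongr
      exact intervalIntegral.norm_integral_le_integral_norm_uIoc.trans
        (setIntegral_le_integral hint.norm (Eventually.of_forall fun _ => norm_nonneg _))
    · refine Eventually.of_forall fun x => tendsto_const_nhds.congr' ?_
      filter_upwards [hev x] with n hn
      rw [← intervalIntegral.integral_Iic_sub_Iic hint.integrableOn hint.integrableOn,
        setIntegral_eq_zero_of_forall_eq_zero (t := Iic (x - n)), sub_zero]
      exact fun y hy => hzero y (lt_of_le_of_lt hy hn)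
  exact tendsto_nhds_unique (hleft.congr hid) hright.neg

/-- An integrable function with integrable weak derivative agrees almost everywhere with the
antiderivative of its weak derivative vanishing at `+∞`. -/
lemma HasWeakDeriv.ae_eq_neg_integral_Ioi {v v' : ℝ → ℂ} (h : HasWeakDeriv v v')
    (hv : Integrable v) (hv' : Integrable v') :
    ∀ᵐ x, v x = -∫ y in Ioi x, v' y := by
  have hcontV : Continuous fun x => -∫ y in Ioi x, v' y := by
    have : (fun x => -∫ y in Ioi x, v' y) =
        fun x => (∫ y in (0 : ℝ)..x, v' y) - ∫ y in Ioi (0 : ℝ), v' y := by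
      funext x
      rw [← intervalIntegral.integral_Ioi_sub_Ioi' hv'.integrableOn hv'.integrableOn]
      ring
    rw [this]
    exact (intervalIntegral.continuous_primitive (fun _ _ => hv'.intervalIntegrable) 0).sub
      continuous_const
  refine ae_eq_of_integral_contDiff_smul_eq h.1 hcontV.locallyIntegrable fun ψ hψ hc => ?_
  have hint : Integrable ψ := hψ.continuous.integrable_of_hasCompactSupport hc
  simp only [Complex.real_smul]
  rw [h.integral_smul_eq hv hv' hψ hc]
  simp only [mul_neg, integral_neg]
  congr 1
  have hprod : Integrable (Function.uncurry fun x y : ℝ =>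
      (Iic x).indicator (fun y => (ψ y : ℂ) * v' x) y) (volume.prod volume) := by
    have h0 : Integrable (fun p : ℝ × ℝ => (ψ p.2 : ℂ) * v' p.1) (volume.prod volume) := by
      have hintC : Integrable fun y => (ψ y : ℂ) := hint.ofReal
      simpa only [mul_comm] using hv'.mul_prod hintC
    have h1 := h0.indicator (s := {p : ℝ × ℝ | p.2 ≤ p.1})
      (measurableSet_le measurable_snd measurable_fst)
    exact h1
  have hswap := integral_integral_swap hprod
  have hl : ∀ x : ℝ, ∫ y, (Iic x).indicator (fun y => (ψ y : ℂ) * v' x) y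
      = ((∫ y in Iic x, ψ y : ℝ) : ℂ) * v' x := by
    intro x
    rw [integral_indicator measurableSet_Iic, integral_mul_const, integral_complex_ofReal]
  have hr : ∀ y : ℝ, ∫ x, (Iic x).indicator (fun y => (ψ y : ℂ) * v' x) y
      = (ψ y : ℂ) * ∫ x in Ioi y, v' x := by
    intro y
    rw [← integral_Ici_eq_integral_Ioi, ← integral_const_mul,
      ← integral_indicator measurableSet_Ici]
    rfl
  simp only [hl, hr] at hswap
  exact hswap

/-- Sobolev embedding `W^{1,1} ⊂ L^∞`. -/
lemma HasWeakDeriv.ae_enorm_le {v v' : ℝ → ℂ} (h : HasWeakDeriv v v')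
    (hv : Integrable v) (hv' : Integrable v') :
    ∀ᵐ x, ‖v x‖ₑ ≤ ∫⁻ y, ‖v' y‖ₑ := by
  filter_upwards [h.ae_eq_neg_integral_Ioi hv hv'] with x hx
  rw [hx, enorm_neg]
  exact (enorm_integral_le_lintegral_enorm _).trans (setLIntegral_le_lintegral _ _)

/-- Translations of a `W^{1,1}` function are Lipschitz in `L^1`. -/
lemma HasWeakDeriv.lintegral_enorm_sub_translate_le {v v' : ℝ → ℂ} (h : HasWeakDeriv v v')
    (hv : Integrable v) (hv' : Integrable v') {r : ℝ} (hr : 0 ≤ r) :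
    ∫⁻ x, ‖v (x + r) - v x‖ₑ ≤ ENNReal.ofReal r * ∫⁻ y, ‖v' y‖ₑ := by
  have hae := h.ae_eq_neg_integral_Ioi hv hv'
  have hae' := (measurePreserving_add_right volume r).quasiMeasurePreserving.ae hae
  calc ∫⁻ x, ‖v (x + r) - v x‖ₑ
      ≤ ∫⁻ x, ∫⁻ y, (Ioc x (x + r)).indicator (fun y => ‖v' y‖ₑ) y := by
        refine lintegral_mono_ae ?_
        filter_upwards [hae, hae'] with x h1 h2
        have : v (x + r) - v x = ∫ y in Ioc x (x + r), v' y := by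
          rw [h1, h2, ← intervalIntegral.integral_of_le (by linarith),
            ← intervalIntegral.integral_Ioi_sub_Ioi hv'.integrableOn (by linarith)]
          ring
        rw [this, lintegral_indicator measurableSet_Ioc]
        exact enorm_integral_le_lintegral_enorm _
    _ = ∫⁻ y, ∫⁻ x, (Ioc x (x + r)).indicator (fun y => ‖v' y‖ₑ) y := by
        refine lintegral_lintegral_swap ?_
        have h0 : AEMeasurable (fun p : ℝ × ℝ => ‖v' p.2‖ₑ) (volume.prod volume) :=
          hv'.aestronglyMeasurable.enorm.comp_snd
        exact h0.indicator (s := {p : ℝ × ℝ | p.1 < p.2 ∧ p.2 ≤ p.1 + r})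
          ((measurableSet_lt measurable_fst measurable_snd).inter
            (measurableSet_le measurable_snd (measurable_fst.add_const r)))
    _ = ∫⁻ y, ENNReal.ofReal r * ‖v' y‖ₑ := by
        refine lintegral_congr fun y => ?_
        have : (fun x => (Ioc x (x + r)).indicator (fun y => ‖v' y‖ₑ) y)
            = (Ico (y - r) y).indicator fun _ => ‖v' y‖ₑ := by
          funext x
          simp only [indicator, mem_Ioc, mem_Ico]
          congr 1
          rw [eq_iff_iff]
          constructor <;> rintro ⟨_, _⟩ <;> constructor <;> linarith
        rw [this, lintegral_indicator measurableSet_Ico, lintegral_const]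
        simp [mul_comm]
    _ = _ := lintegral_const_mul' _ _ ENNReal.ofReal_ne_top

/-- The triple convolution `F₁ * F₂ * F₃` of `[0, ∞]`-valued functions. -/
def tripleConv (F₁ F₂ F₃ : ℝ → ℝ≥0∞) (k : ℝ) : ℝ≥0∞ :=
  ∫⁻ ξ, ∫⁻ ζ, F₁ (k - ξ) * (F₂ (ξ - ζ) * F₃ ζ)

lemma lintegral_conv {F G : ℝ → ℝ≥0∞} (hF : Measurable F) (hG : Measurable G) :
    ∫⁻ x, ∫⁻ y, F (x - y) * G y = (∫⁻ x, F x) * ∫⁻ y, G y := by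
  rw [lintegral_lintegral_swap (Measurable.aemeasurable (by fun_prop)), mul_comm,
    ← lintegral_mul_const _ hG]
  refine lintegral_congr fun y => ?_
  rw [lintegral_mul_const _ (by fun_prop), lintegral_sub_right_eq_self, mul_comm]

lemma measurable_conv {F G : ℝ → ℝ≥0∞} (hF : Measurable F) (hG : Measurable G) :
    Measurable fun x => ∫⁻ y, F (x - y) * G y :=
  Measurable.lintegral_prod_right' (f := fun p : ℝ × ℝ => F (p.1 - p.2) * G p.2) (by fun_prop)

lemma tripleConv_eq {F₁ F₂ F₃ : ℝ → ℝ≥0∞} (h₂ : Measurable F₂) (h₃ : Measurable F₃) (k : ℝ) :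
    tripleConv F₁ F₂ F₃ k = ∫⁻ ξ, F₁ (k - ξ) * ∫⁻ ζ, F₂ (ξ - ζ) * F₃ ζ :=
  lintegral_congr fun _ => lintegral_const_mul _ (by fun_prop)

lemma measurable_tripleConv {F₁ F₂ F₃ : ℝ → ℝ≥0∞} (h₁ : Measurable F₁) (h₂ : Measurable F₂)
    (h₃ : Measurable F₃) : Measurable (tripleConv F₁ F₂ F₃) := by
  rw [funext (tripleConv_eq (F₁ := F₁) h₂ h₃)]
  exact measurable_conv h₁ (measurable_conv h₂ h₃)

lemma lintegral_tripleConv {F₁ F₂ F₃ : ℝ → ℝ≥0∞} (h₁ : Measurable F₁) (h₂ : Measurable F₂)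
    (h₃ : Measurable F₃) :
    ∫⁻ k, tripleConv F₁ F₂ F₃ k = (∫⁻ x, F₁ x) * ((∫⁻ x, F₂ x) * ∫⁻ x, F₃ x) := by
  simp only [tripleConv_eq h₂ h₃]
  rw [lintegral_conv h₁ (measurable_conv h₂ h₃), lintegral_conv h₂ h₃]

lemma tripleConv_le {F₁ F₂ F₃ : ℝ → ℝ≥0∞} {M : ℝ≥0∞} (h₁ : ∀ᵐ x, F₁ x ≤ M)
    (h₂ : Measurable F₂) (h₃ : Measurable F₃) (k : ℝ) :
    tripleConv F₁ F₂ F₃ k ≤ M * ((∫⁻ x, F₂ x) * ∫⁻ x, F₃ x) := by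
  rw [tripleConv_eq h₂ h₃, ← lintegral_conv h₂ h₃,
    ← lintegral_const_mul _ (measurable_conv h₂ h₃)]
  refine lintegral_mono_ae ?_
  filter_upwards [(Measure.measurePreserving_sub_left volume k).quasiMeasurePreserving.ae h₁] with ξ hξ
  gcongr

lemma norm_expc (x y : ℝ) : ‖expc x y‖ = Real.exp x := by
  rw [expc, Complex.norm_exp]
  simp

lemma expc_eq_mul (x y : ℝ) : expc x y = Real.exp x * expc 0 y := by
  simp [expc, Complex.exp_add]

lemma enorm_expc_zero (y : ℝ) : ‖expc 0 y‖ₑ = 1 := by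
  rw [← ofReal_norm, norm_expc]
  simp

lemma measurable_expc : Measurable (Function.uncurry expc) := by
  unfold expc Function.uncurry
  fun_prop

/-- Translating by half a period flips the sign of the phase. -/
lemma expc_zero_half_period {c : ℝ} (hc : c ≠ 0) (ζ : ℝ) :
    expc 0 (c * (ζ + π / |c|)) = -expc 0 (c * ζ) := by
  have hsplit : expc 0 (c * (ζ + π / |c|)) = expc 0 (c * ζ) * expc 0 (c * (π / |c|)) := by
    rw [expc, expc, expc, ← Complex.exp_add]
    congr 1
    push_cast
    ring
  have hm1 : expc 0 (c * (π / |c|)) = -1 := by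
    rcases lt_or_gt_of_ne hc with h | h
    · rw [abs_of_neg h, show c * (π / -c) = -π by field_simp]
      simp [expc, Complex.exp_neg]
    · rw [abs_of_pos h, show c * (π / c) = π by field_simp]
      simp [expc]
  rw [hsplit, hm1, mul_neg_one]

/-- Non-stationary phase without derivatives: an oscillatory integral is controlled by the
variation of its amplitude over half a period. -/
lemma enorm_integral_expc_mul_le {c : ℝ} (hc : c ≠ 0) (f : ℝ → ℂ) :
    2 * ‖∫ ζ, expc 0 (c * ζ) * f ζ‖ₑ ≤ ∫⁻ ζ, ‖f (ζ + π / |c|) - f ζ‖ₑ := by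
  by_cases hf : Integrable fun ζ => expc 0 (c * ζ) * f ζ
  · have hf' := hf.comp_add_right (π / |c|)
    have key : (2 : ℂ) * ∫ ζ, expc 0 (c * ζ) * f ζ
        = ∫ ζ, -expc 0 (c * ζ) * (f (ζ + π / |c|) - f ζ) := by
      have h1 := integral_add_right_eq_self (μ := volume)
        (fun ζ => expc 0 (c * ζ) * f ζ) (π / |c|)
      rw [two_mul]
      nth_rewrite 1 [← h1]
      rw [← integral_add hf' hf]
      refine integral_congr_ae (Eventually.of_forall fun ζ => ?_)
      simp only [expc_zero_half_period hc]
      ring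
    calc 2 * ‖∫ ζ, expc 0 (c * ζ) * f ζ‖ₑ = ‖(2 : ℂ) * ∫ ζ, expc 0 (c * ζ) * f ζ‖ₑ := by
          rw [enorm_mul, ← ofReal_norm (2 : ℂ)]
          simp
      _ ≤ _ := by
          rw [key]
          refine (enorm_integral_le_lintegral_enorm _).trans_eq (lintegral_congr fun ζ => ?_)
          rw [enorm_mul, enorm_neg, enorm_expc_zero, one_mul]
  · simp [integral_undef hf]

/-- The cubic oscillatory term with phase frequency `c`. -/
def cubicTerm (c : ℝ) (f₁ f₂ f₃ : ℝ → ℂ) (k : ℝ) : ℂ :=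
  ∫ ξ, ∫ ζ, expc 0 (c * ζ) * (f₁ (k - ξ) * f₂ (ξ - ζ) * f₃ ζ)

lemma enorm_cubicTerm_le (c : ℝ) (f₁ f₂ f₃ : ℝ → ℂ) (k : ℝ) :
    ‖cubicTerm c f₁ f₂ f₃ k‖ₑ ≤
      tripleConv (fun x => ‖f₁ x‖ₑ) (fun x => ‖f₂ x‖ₑ) (fun x => ‖f₃ x‖ₑ) k := by
  refine (enorm_integral_le_lintegral_enorm _).trans (lintegral_mono fun ξ => ?_)
  refine (enorm_integral_le_lintegral_enorm _).trans_eq (lintegral_congr fun ζ => ?_)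
  rw [enorm_mul, enorm_mul, enorm_mul, enorm_expc_zero, one_mul, mul_assoc]

lemma two_mul_enorm_cubicTerm_le {c : ℝ} (hc : c ≠ 0) {f₁ f₂ f₃ : ℝ → ℂ} (h₁ : Measurable f₁)
    (h₂ : Measurable f₂) (h₃ : Measurable f₃) (k : ℝ) :
    2 * ‖cubicTerm c f₁ f₂ f₃ k‖ₑ ≤
      tripleConv (fun x => ‖f₁ x‖ₑ) (fun x => ‖f₂ (x - π / |c| + π / |c|) - f₂ (x - π / |c|)‖ₑ)
        (fun x => ‖f₃ x‖ₑ) k +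
      tripleConv (fun x => ‖f₁ x‖ₑ) (fun x => ‖f₂ (x - π / |c|)‖ₑ)
        (fun x => ‖f₃ (x + π / |c|) - f₃ x‖ₑ) k := by
  set r := π / |c| with hr
  have hsum : tripleConv (fun x => ‖f₁ x‖ₑ) (fun x => ‖f₂ (x - r + r) - f₂ (x - r)‖ₑ)
        (fun x => ‖f₃ x‖ₑ) k +
      tripleConv (fun x => ‖f₁ x‖ₑ) (fun x => ‖f₂ (x - r)‖ₑ)
        (fun x => ‖f₃ (x + r) - f₃ x‖ₑ) k =
      ∫⁻ ξ, ∫⁻ ζ, (‖f₁ (k - ξ)‖ₑ * (‖f₂ (ξ - ζ - r + r) - f₂ (ξ - ζ - r)‖ₑ * ‖f₃ ζ‖ₑ) +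
        ‖f₁ (k - ξ)‖ₑ * (‖f₂ (ξ - ζ - r)‖ₑ * ‖f₃ (ζ + r) - f₃ ζ‖ₑ)) := by
    rw [tripleConv, tripleConv, ← lintegral_add_left]
    · refine lintegral_congr fun ξ => ?_
      rw [lintegral_add_left (by fun_prop)]
    · exact Measurable.lintegral_prod_right' (f := fun p : ℝ × ℝ => ‖f₁ (k - p.1)‖ₑ *
        (‖f₂ (p.1 - p.2 - r + r) - f₂ (p.1 - p.2 - r)‖ₑ * ‖f₃ p.2‖ₑ)) (by fun_prop)
  rw [hsum]
  calc 2 * ‖cubicTerm c f₁ f₂ f₃ k‖ₑ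
      ≤ 2 * ∫⁻ ξ, ‖∫ ζ, expc 0 (c * ζ) * (f₁ (k - ξ) * f₂ (ξ - ζ) * f₃ ζ)‖ₑ := by
        gcongr
        exact enorm_integral_le_lintegral_enorm _
    _ = ∫⁻ ξ, 2 * ‖∫ ζ, expc 0 (c * ζ) * (f₁ (k - ξ) * f₂ (ξ - ζ) * f₃ ζ)‖ₑ :=
        (lintegral_const_mul' _ _ (by simp)).symm
    _ ≤ _ := by
        refine lintegral_mono fun ξ => ?_
        refine (enorm_integral_expc_mul_le hc _).trans (lintegral_mono fun ζ => ?_)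
        simp only [← hr]
        rw [← enorm_mul, ← enorm_mul, ← enorm_mul, ← enorm_mul, ← enorm_neg (_ * (_ * f₃ ζ))]
        refine le_of_eq_of_le (congrArg _ ?_) (enorm_add_le _ _)
        rw [show ξ - (ζ + r) = ξ - ζ - r by ring, sub_add_cancel]
        ring

/-- `L¹` and `L^∞` bounds of the cubic term without use of the oscillation. -/
lemma cubicTerm_bounds (c : ℝ) {f₁ f₁' f₂ f₃ : ℝ → ℂ} {p q : ℝ≥0∞}
    (m₁ : Measurable f₁) (m₂ : Measurable f₂) (m₃ : Measurable f₃)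
    (h₁ : HasWeakDeriv f₁ f₁') (i₁ : Integrable f₁) (i₁' : Integrable f₁')
    (p₁ : ∫⁻ x, ‖f₁ x‖ₑ ≤ p) (p₂ : ∫⁻ x, ‖f₂ x‖ₑ ≤ p) (p₃ : ∫⁻ x, ‖f₃ x‖ₑ ≤ p)
    (q₁ : ∫⁻ x, ‖f₁' x‖ₑ ≤ q) :
    ∫⁻ k, ‖cubicTerm c f₁ f₂ f₃ k‖ₑ ≤ p * (p * p) ∧
      ∀ k, ‖cubicTerm c f₁ f₂ f₃ k‖ₑ ≤ q * (p * p) := by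
  constructor
  · refine (lintegral_mono (enorm_cubicTerm_le c f₁ f₂ f₃)).trans ?_
    rw [lintegral_tripleConv m₁.enorm m₂.enorm m₃.enorm]
    gcongr
  · intro k
    refine (enorm_cubicTerm_le c f₁ f₂ f₃ k).trans ?_
    refine (tripleConv_le (h₁.ae_enorm_le i₁ i₁') m₂.enorm m₃.enorm k).trans ?_
    gcongr

/-- `L¹` and `L^∞` bounds of the cubic term gaining the inverse of the phase frequency. -/
lemma cubicTerm_bounds_oscillatory {c : ℝ} (hc : c ≠ 0) {f₁ f₁' f₂ f₂' f₃ f₃' : ℝ → ℂ}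
    {p q : ℝ≥0∞} (m₁ : Measurable f₁) (m₂ : Measurable f₂) (m₃ : Measurable f₃)
    (h₁ : HasWeakDeriv f₁ f₁') (h₂ : HasWeakDeriv f₂ f₂') (h₃ : HasWeakDeriv f₃ f₃')
    (i₁ : Integrable f₁) (i₁' : Integrable f₁') (i₂ : Integrable f₂) (i₂' : Integrable f₂')
    (i₃ : Integrable f₃) (i₃' : Integrable f₃')
    (p₁ : ∫⁻ x, ‖f₁ x‖ₑ ≤ p) (p₂ : ∫⁻ x, ‖f₂ x‖ₑ ≤ p) (p₃ : ∫⁻ x, ‖f₃ x‖ₑ ≤ p)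
    (q₁ : ∫⁻ x, ‖f₁' x‖ₑ ≤ q) (q₂ : ∫⁻ x, ‖f₂' x‖ₑ ≤ q) (q₃ : ∫⁻ x, ‖f₃' x‖ₑ ≤ q) :
    ∫⁻ k, ‖cubicTerm c f₁ f₂ f₃ k‖ₑ ≤ ENNReal.ofReal (π / |c|) * (q * (p * p)) ∧
      ∀ k, ‖cubicTerm c f₁ f₂ f₃ k‖ₑ ≤ ENNReal.ofReal (π / |c|) * (q * (q * p)) := by
  have hle := two_mul_enorm_cubicTerm_le hc m₁ m₂ m₃
  have hr : 0 ≤ π / |c| := by positivity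
  set r := π / |c|
  have d₂ : ∫⁻ x, ‖f₂ (x - r + r) - f₂ (x - r)‖ₑ ≤ ENNReal.ofReal r * q := by
    rw [lintegral_sub_right_eq_self (fun x => ‖f₂ (x + r) - f₂ x‖ₑ) r]
    exact (h₂.lintegral_enorm_sub_translate_le i₂ i₂' hr).trans (by gcongr)
  have d₃ : ∫⁻ x, ‖f₃ (x + r) - f₃ x‖ₑ ≤ ENNReal.ofReal r * q :=
    (h₃.lintegral_enorm_sub_translate_le i₃ i₃' hr).trans (by gcongr)
  have e₂ : ∫⁻ x, ‖f₂ (x - r)‖ₑ ≤ p := by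
    rwa [lintegral_sub_right_eq_self (fun x => ‖f₂ x‖ₑ) r]
  have n₂ : Measurable fun x => ‖f₂ (x - r + r) - f₂ (x - r)‖ₑ := by fun_prop
  have n₂' : Measurable fun x => ‖f₂ (x - r)‖ₑ := by fun_prop
  have n₃ : Measurable fun x => ‖f₃ (x + r) - f₃ x‖ₑ := by fun_prop
  have halve : ∀ {x y : ℝ≥0∞}, 2 * x ≤ 2 * y → x ≤ y := fun h =>
    (ENNReal.mul_le_mul_iff_right (by simp) (by simp)).1 h
  constructor
  · refine halve ?_
    rw [← lintegral_const_mul' _ _ (by simp)]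
    refine (lintegral_mono hle).trans ?_
    rw [lintegral_add_left (measurable_tripleConv m₁.enorm n₂ m₃.enorm),
      lintegral_tripleConv m₁.enorm n₂ m₃.enorm, lintegral_tripleConv m₁.enorm n₂' n₃]
    calc _ ≤ p * ((ENNReal.ofReal r * q) * p) + p * (p * (ENNReal.ofReal r * q)) := by gcongr
      _ = _ := by ring
  · intro k
    refine halve ((hle k).trans ?_)
    have hs := h₁.ae_enorm_le i₁ i₁'
    refine (add_le_add (tripleConv_le hs n₂ m₃.enorm k) (tripleConv_le hs n₂' n₃ k)).trans ?_
    calc _ ≤ q * ((ENNReal.ofReal r * q) * p) + q * (p * (ENNReal.ofReal r * q)) := by gcongr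
      _ = _ := by ring

/-- Decay in `s` of the cubic term whose phase frequency grows linearly in `s`. -/
lemma cubicTerm_decay {b s η : ℝ} (hb : b ≠ 0) (hs : 0 ≤ s) (hη : 0 ≤ η)
    {f₁ f₁' f₂ f₂' f₃ f₃' : ℝ → ℂ}
    (m₁ : Measurable f₁) (m₂ : Measurable f₂) (m₃ : Measurable f₃)
    (h₁ : HasWeakDeriv f₁ f₁') (h₂ : HasWeakDeriv f₂ f₂') (h₃ : HasWeakDeriv f₃ f₃')
    (i₁ : Integrable f₁) (i₁' : Integrable f₁') (i₂ : Integrable f₂) (i₂' : Integrable f₂')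
    (i₃ : Integrable f₃) (i₃' : Integrable f₃')
    (p₁ : ∫ x, ‖f₁ x‖ ≤ η * (1 / √(1 + s))) (p₂ : ∫ x, ‖f₂ x‖ ≤ η * (1 / √(1 + s)))
    (p₃ : ∫ x, ‖f₃ x‖ ≤ η * (1 / √(1 + s)))
    (q₁ : ∫ x, ‖f₁' x‖ ≤ η) (q₂ : ∫ x, ‖f₂' x‖ ≤ η) (q₃ : ∫ x, ‖f₃' x‖ ≤ η) :
    ∫⁻ k, ‖cubicTerm (b * s) f₁ f₂ f₃ k‖ₑ ≤
        ENNReal.ofReal ((2 + 2 * π / |b|) * η ^ 3 * (1 / √(1 + s)) ^ 4) ∧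
      ∀ k, ‖cubicTerm (b * s) f₁ f₂ f₃ k‖ₑ ≤
        ENNReal.ofReal ((2 + 2 * π / |b|) * η ^ 3 * (1 / √(1 + s)) ^ 3) := by
  have conv : ∀ {f : ℝ → ℂ} {x : ℝ}, Integrable f → ∫ y, ‖f y‖ ≤ x →
      ∫⁻ y, ‖f y‖ₑ ≤ ENNReal.ofReal x := by
    intro f x hf hx
    rw [← ofReal_integral_norm_eq_lintegral_enorm hf]
    exact ENNReal.ofReal_le_ofReal hx
  set r := 1 / √(1 + s) with hr
  have hr0 : 0 ≤ r := by positivity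
  have hr2 : r ^ 2 = 1 / (1 + s) := by
    rw [hr, div_pow, one_pow, Real.sq_sqrt (by linarith)]
  have hr1 : r ≤ 1 := by
    have : r ^ 2 ≤ 1 := by rw [hr2, div_le_one (by linarith)]; linarith
    nlinarith
  have hB : 0 ≤ 2 * π / |b| := by positivity
  rcases le_total s 1 with h | h
  · obtain ⟨hL, hS⟩ := cubicTerm_bounds (b * s) m₁ m₂ m₃ h₁ i₁ i₁' (conv i₁ p₁) (conv i₂ p₂)
      (conv i₃ p₃) (conv i₁' q₁)
    have hA : 1 ≤ (2 + 2 * π / |b|) * r ^ 2 := by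
      have h2 : 1 ≤ 2 * r ^ 2 := by
        rw [hr2, mul_one_div, le_div_iff₀ (by linarith)]; linarith
      nlinarith [mul_nonneg hB (sq_nonneg r)]
    constructor
    · refine hL.trans ?_
      rw [← ENNReal.ofReal_mul (by positivity), ← ENNReal.ofReal_mul (by positivity)]
      refine ENNReal.ofReal_le_ofReal ?_
      calc η * r * (η * r * (η * r)) = η ^ 3 * r ^ 2 * r := by ring
        _ ≤ η ^ 3 * r ^ 2 * ((2 + 2 * π / |b|) * r ^ 2) := by gcongr; exact hr1.trans hA
        _ = _ := by ring
    · refine fun k => (hS k).trans ?_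
      rw [← ENNReal.ofReal_mul (by positivity), ← ENNReal.ofReal_mul (by positivity)]
      refine ENNReal.ofReal_le_ofReal ?_
      calc η * (η * r * (η * r)) = η ^ 3 * r * r := by ring
        _ ≤ η ^ 3 * r * ((2 + 2 * π / |b|) * r ^ 2) := by gcongr; exact hr1.trans hA
        _ = _ := by ring
  · have hs' : 0 < s := by linarith
    obtain ⟨hL, hS⟩ := cubicTerm_bounds_oscillatory (mul_ne_zero hb hs'.ne') m₁ m₂ m₃ h₁ h₂ h₃
      i₁ i₁' i₂ i₂' i₃ i₃' (conv i₁ p₁) (conv i₂ p₂) (conv i₃ p₃)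
      (conv i₁' q₁) (conv i₂' q₂) (conv i₃' q₃)
    have hA : π / |b * s| ≤ (2 + 2 * π / |b|) * r ^ 2 := by
      have hb' : 0 < |b| := abs_pos.2 hb
      have h2 : π / |b * s| ≤ 2 * π / |b| * r ^ 2 := by
        rw [hr2, abs_mul, abs_of_pos hs', mul_one_div, div_div,
          div_le_div_iff₀ (by positivity) (by positivity)]
        have : 0 ≤ π * |b| := by positivity
        nlinarith
      nlinarith [sq_nonneg r]
    constructor
    · refine hL.trans ?_
      rw [← ENNReal.ofReal_mul (by positivity), ← ENNReal.ofReal_mul (by positivity),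
        ← ENNReal.ofReal_mul (by positivity)]
      refine ENNReal.ofReal_le_ofReal ?_
      calc π / |b * s| * (η * (η * r * (η * r))) = η ^ 3 * r ^ 2 * (π / |b * s|) := by ring
        _ ≤ η ^ 3 * r ^ 2 * ((2 + 2 * π / |b|) * r ^ 2) := by gcongr
        _ = _ := by ring
    · refine fun k => (hS k).trans ?_
      rw [← ENNReal.ofReal_mul (by positivity), ← ENNReal.ofReal_mul (by positivity),
        ← ENNReal.ofReal_mul (by positivity)]
      refine ENNReal.ofReal_le_ofReal ?_
      calc π / |b * s| * (η * (η * (η * r))) = η ^ 3 * r * (π / |b * s|) := by ring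
        _ ≤ η ^ 3 * r * ((2 + 2 * π / |b|) * r ^ 2) := by gcongr
        _ = _ := by ring

/-- Half of the Gaussian absorbs a factor `|k|`. -/
lemma abs_pow_mul_gaussian_le {β : ℝ} (hβ : 0 < β) {a : ℕ} (ha : a ≤ 1) (k : ℝ) :
    |k| ^ a * Real.exp (-(β * k ^ 2)) ≤
      (1 / √(β / 2)) ^ a * Real.exp (-(β / 2) * k ^ 2) := by
  have hsplit : Real.exp (-(β * k ^ 2)) =
      Real.exp (-(β / 2 * k ^ 2)) * Real.exp (-(β / 2) * k ^ 2) := by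
    rw [← Real.exp_add]; congr 1; ring
  rw [hsplit, ← mul_assoc]
  gcongr
  have hle : Real.exp (-(β / 2 * k ^ 2)) ≤ 1 := Real.exp_le_one_iff.2 (by
    have : 0 ≤ β / 2 * k ^ 2 := by positivity
    linarith)
  interval_cases a
  · simpa using hle
  · have hq : 0 < √(β / 2) := Real.sqrt_pos.2 (by linarith)
    rw [pow_one, pow_one, le_div_iff₀ hq, Real.exp_neg, ← div_eq_mul_inv, div_mul_eq_mul_div,
      div_le_one (Real.exp_pos _)]
    have h1 := Real.add_one_le_exp (β / 2 * k ^ 2)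
    have h2 : β / 2 * k ^ 2 = (|k| * √(β / 2)) ^ 2 := by
      rw [mul_pow, sq_abs, Real.sq_sqrt (by linarith)]; ring
    nlinarith [sq_nonneg (|k| * √(β / 2) - 1)]

/-- Heat semigroup bounds: a Gaussian weight applied to a function in `L¹ ∩ L^∞`. -/
lemma lintegral_gaussian_weight_mul_le {d τ : ℝ} (hd : 0 < d) (hτ : 0 < τ) {a : ℕ} (ha : a ≤ 1)
    {F : ℝ → ℝ≥0∞} {m M : ℝ}
    (hL : ∫⁻ k, F k ≤ ENNReal.ofReal m) (hS : ∀ k, F k ≤ ENNReal.ofReal M) :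
    ∫⁻ k, ENNReal.ofReal (|k| ^ a * Real.exp (-(d * k ^ 2 * τ))) * F k ≤
      ENNReal.ofReal ((1 + 1 / √(d / 2)) * (1 / √τ) ^ a * m) ∧
    ∫⁻ k, ENNReal.ofReal (|k| ^ a * Real.exp (-(d * k ^ 2 * τ))) * F k ≤
      ENNReal.ofReal ((1 + 1 / √(d / 2)) * √(2 * π / d) * (1 / √τ) ^ (a + 1) * M) := by
  have hβ : 0 < d * τ := mul_pos hd hτ
  have hfac : (1 / √(d * τ / 2)) ^ a ≤ (1 + 1 / √(d / 2)) * (1 / √τ) ^ a := by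
    have : 1 / √(d * τ / 2) = 1 / √(d / 2) * (1 / √τ) := by
      rw [mul_div_right_comm, Real.sqrt_mul (by positivity)]; field_simp
    rw [this, mul_pow]
    gcongr
    have h0 : 0 ≤ 1 / √(d / 2) := by positivity
    interval_cases a
    · simpa using h0
    · simp
  have hw : ∀ k : ℝ, |k| ^ a * Real.exp (-(d * k ^ 2 * τ)) ≤
      (1 + 1 / √(d / 2)) * (1 / √τ) ^ a * Real.exp (-(d * τ / 2) * k ^ 2) := by
    intro k
    rw [show d * k ^ 2 * τ = d * τ * k ^ 2 by ring]
    exact (abs_pow_mul_gaussian_le hβ ha k).trans (by gcongr)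
  have hD : 0 ≤ (1 + 1 / √(d / 2)) * (1 / √τ) ^ a := by positivity
  constructor
  · calc _ ≤ ∫⁻ k, ENNReal.ofReal ((1 + 1 / √(d / 2)) * (1 / √τ) ^ a) * F k := by
          refine lintegral_mono fun k => ?_
          refine mul_le_mul_left (ENNReal.ofReal_le_ofReal ?_) _
          refine (hw k).trans (mul_le_of_le_one_right hD (Real.exp_le_one_iff.2 ?_))
          have : 0 ≤ d * τ / 2 * k ^ 2 := by positivity
          linarith
      _ ≤ _ := by
          rw [lintegral_const_mul' _ _ ENNReal.ofReal_ne_top, ENNReal.ofReal_mul hD]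
          gcongr
  · calc _ ≤ ∫⁻ k, ENNReal.ofReal ((1 + 1 / √(d / 2)) * (1 / √τ) ^ a *
            Real.exp (-(d * τ / 2) * k ^ 2)) * ENNReal.ofReal M := by
          exact lintegral_mono fun k => mul_le_mul' (ENNReal.ofReal_le_ofReal (hw k)) (hS k)
      _ = _ := by
          rw [lintegral_mul_const' _ _ ENNReal.ofReal_ne_top,
            ← ofReal_integral_eq_lintegral_ofReal
              ((integrable_exp_neg_mul_sq (by positivity)).const_mul _)
              (Eventually.of_forall fun k => mul_nonneg hD (Real.exp_pos _).le),
            ← ENNReal.ofReal_mul (by positivity), integral_const_mul, integral_gaussian]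
          congr 1
          rw [show π / (d * τ / 2) = 2 * π / d * (1 / τ) by field_simp,
            Real.sqrt_mul (by positivity), Real.sqrt_div zero_le_one, Real.sqrt_one]
          ring

lemma integrableOn_and_integral_inv_sqrt_cube_le {t : ℝ} (ht : 0 ≤ t) :
    IntegrableOn (fun s : ℝ => (1 / √(1 + s)) ^ 3) (Ioo 0 t) ∧
      ∫ s in Ioo 0 t, (1 / √(1 + s)) ^ 3 ≤ 2 := by
  have hcont : ContinuousOn (fun s : ℝ => (1 / √(1 + s)) ^ 3) (uIcc 0 t) := by
    rw [uIcc_of_le ht]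
    refine (ContinuousOn.div continuousOn_const (by fun_prop) fun s hs => ?_).pow 3
    exact (Real.sqrt_pos.2 (by linarith [hs.1])).ne'
  have hii : IntervalIntegrable (fun s : ℝ => (1 / √(1 + s)) ^ 3) volume 0 t :=
    hcont.intervalIntegrable
  refine ⟨((intervalIntegrable_iff_integrableOn_Ioo_of_le ht).1 hii), ?_⟩
  rw [← integral_Ioc_eq_integral_Ioo, ← intervalIntegral.integral_of_le ht]
  have hder : ∀ s ∈ uIcc 0 t,
      HasDerivAt (fun s : ℝ => -2 * (√(1 + s))⁻¹) ((1 / √(1 + s)) ^ 3) s := by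
    intro s hs
    rw [uIcc_of_le ht] at hs
    have hs1 : 0 < 1 + s := by linarith [hs.1]
    have hq : √(1 + s) ≠ 0 := (Real.sqrt_pos.2 hs1).ne'
    have h1 := (((hasDerivAt_id s).const_add 1).sqrt hs1.ne').inv hq
    refine (h1.const_mul (-2)).congr_deriv ?_
    simp only [id]
    field_simp
  rw [intervalIntegral.integral_eq_sub_of_hasDerivAt hder hii]
  have : 0 ≤ (√(1 + t))⁻¹ := by positivity
  simp only [add_zero, Real.sqrt_one, inv_one]
  linarith

lemma integrableOn_and_integral_inv_sqrt_sub_pow_le {t : ℝ} (ht : 0 ≤ t) {a : ℕ} (ha : a ≤ 1) :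
    IntegrableOn (fun s : ℝ => (1 / √(t - s)) ^ a) (Ioo 0 t) ∧
      (1 / √(1 + t)) ^ 2 * ∫ s in Ioo 0 t, (1 / √(t - s)) ^ a ≤ 2 * (1 / √(1 + t)) ^ a := by
  have ht1 : 0 < 1 + t := by linarith
  have hR2 : (1 / √(1 + t)) ^ 2 = 1 / (1 + t) := by
    rw [div_pow, one_pow, Real.sq_sqrt ht1.le]
  rw [hR2]
  interval_cases a
  · simp only [pow_zero]
    refine ⟨integrableOn_const (by simp), ?_⟩
    have : (1 / (1 + t)) * t ≤ 2 := by
      rw [one_div_mul_eq_div, div_le_iff₀ ht1]; linarith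
    simpa [ht] using this
  · simp only [pow_one]
    have heq : EqOn (fun s : ℝ => (t - s) ^ (-(1 / 2) : ℝ)) (fun s => 1 / √(t - s)) (Ioo 0 t) := by
      intro s hs
      simp only
      rw [Real.rpow_neg (by linarith [hs.2]), ← Real.sqrt_eq_rpow, one_div]
    have hii : IntervalIntegrable (fun s : ℝ => (t - s) ^ (-(1 / 2) : ℝ)) volume 0 t := by
      simpa using (intervalIntegral.intervalIntegrable_rpow' (a := t) (b := 0)
        (r := -(1 / 2)) (by norm_num)).comp_sub_left t
    refine ⟨((intervalIntegrable_iff_integrableOn_Ioo_of_le ht).1 hii).congr_fun heq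
      measurableSet_Ioo, ?_⟩
    rw [← setIntegral_congr_fun measurableSet_Ioo heq, ← integral_Ioc_eq_integral_Ioo,
      ← intervalIntegral.integral_of_le ht,
      intervalIntegral.integral_comp_sub_left (fun x : ℝ => x ^ (-(1 / 2) : ℝ)) t, sub_self,
      sub_zero, integral_rpow (Or.inl (by norm_num)), show (-(1 / 2) + 1 : ℝ) = 1 / 2 by norm_num,
      ← Real.sqrt_eq_rpow, ← Real.sqrt_eq_rpow, Real.sqrt_zero, sub_zero, ← hR2]
    have hq : 0 < √(1 + t) := Real.sqrt_pos.2 ht1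
    calc (1 / √(1 + t)) ^ 2 * (√t / (1 / 2)) ≤ (1 / √(1 + t)) ^ 2 * (√(1 + t) / (1 / 2)) := by
          gcongr
          linarith
      _ = 2 * (1 / √(1 + t)) := by field_simp

/-- Comparison of the kernel bounds with an integrable majorant: either `1 + s` or `t - s` is
comparable with `1 + t`. -/
lemma min_kernel_bounds_le {s t : ℝ} (hs : 0 ≤ s) (hst : s < t) {a : ℕ} (ha : a ≤ 1) :
    (1 / √(t - s)) ^ a * (1 / √(1 + s)) ^ 4 ≤
        4 * ((1 / √(1 + t)) ^ (a + 1) * (1 / √(1 + s)) ^ 3 +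
          (1 / √(1 + t)) ^ 4 * (1 / √(t - s)) ^ a) ∨
    (1 / √(t - s)) ^ (a + 1) * (1 / √(1 + s)) ^ 3 ≤
        4 * ((1 / √(1 + t)) ^ (a + 1) * (1 / √(1 + s)) ^ 3 +
          (1 / √(1 + t)) ^ 4 * (1 / √(t - s)) ^ a) := by
  have hsq : ∀ {x : ℝ}, 0 < x → (1 / √x) ^ 2 = 1 / x := fun hx => by
    rw [div_pow, one_pow, Real.sq_sqrt hx.le]
  have e1 := hsq (x := 1 + s) (by linarith)
  have e2 := hsq (x := 1 + t) (by linarith)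
  have e3 := hsq (x := t - s) (by linarith)
  have p1 : 0 ≤ 1 / √(1 + s) := by positivity
  have p2 : 0 ≤ 1 / √(1 + t) := by positivity
  have p3 : 0 ≤ 1 / √(t - s) := by positivity
  set r := 1 / √(1 + s)
  set R := 1 / √(1 + t)
  set σ := 1 / √(t - s)
  have n1 : 0 ≤ R ^ (a + 1) * r ^ 3 := by positivity
  have n2 : 0 ≤ R ^ 4 * σ ^ a := by positivity
  rcases le_total (1 + t) (2 * (1 + s)) with h | h
  · left
    have h1 : r ^ 2 ≤ 2 * R ^ 2 := by
      rw [e1, e2, mul_one_div, div_le_div_iff₀ (by linarith) (by linarith)]; linarith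
    have h2 : r ^ 4 ≤ 4 * R ^ 4 := by nlinarith [sq_nonneg r, sq_nonneg R]
    calc σ ^ a * r ^ 4 ≤ σ ^ a * (4 * R ^ 4) := by gcongr
      _ ≤ _ := by linarith
  · right
    have h1 : σ ^ 2 ≤ 2 * R ^ 2 := by
      rw [e3, e2, mul_one_div, div_le_div_iff₀ (by linarith) (by linarith)]; linarith
    have h2 : σ ≤ 2 * R := by nlinarith
    have h3 : σ ^ (a + 1) ≤ 4 * R ^ (a + 1) := by
      interval_cases a <;> norm_num <;> nlinarith
    calc σ ^ (a + 1) * r ^ 3 ≤ 4 * R ^ (a + 1) * r ^ 3 := by gcongr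
      _ ≤ _ := by linarith

/-- Time integral of the majorant. -/
lemma lintegral_majorant_le {t K : ℝ} (ht : 0 ≤ t) (hK : 0 ≤ K) {a : ℕ} (ha : a ≤ 1) :
    ∫⁻ s in Ioo 0 t, ENNReal.ofReal (K * ((1 / √(1 + t)) ^ (a + 1) * (1 / √(1 + s)) ^ 3 +
      (1 / √(1 + t)) ^ 4 * (1 / √(t - s)) ^ a)) ≤
    ENNReal.ofReal (4 * K * (1 / √(1 + t)) ^ (a + 1)) := by
  obtain ⟨i1, b1⟩ := integrableOn_and_integral_inv_sqrt_cube_le ht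
  obtain ⟨i2, b2⟩ := integrableOn_and_integral_inv_sqrt_sub_pow_le ht ha
  have hR0 : 0 ≤ 1 / √(1 + t) := by positivity
  have hR1 : 1 / √(1 + t) ≤ 1 := by
    rw [div_le_one (Real.sqrt_pos.2 (by linarith)), Real.one_le_sqrt]
    linarith
  set R := 1 / √(1 + t)
  have hint : IntegrableOn (fun s => K * (R ^ (a + 1) * (1 / √(1 + s)) ^ 3 +
      R ^ 4 * (1 / √(t - s)) ^ a)) (Ioo 0 t) :=
    ((i1.const_mul (R ^ (a + 1))).add (i2.const_mul (R ^ 4))).const_mul K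
  rw [← ofReal_integral_eq_lintegral_ofReal hint
    (Eventually.of_forall fun s => by positivity)]
  refine ENNReal.ofReal_le_ofReal ?_
  rw [integral_const_mul, integral_add (i1.const_mul (R ^ (a + 1))) (i2.const_mul (R ^ 4)),
    integral_const_mul, integral_const_mul]
  have c1 : R ^ (a + 1) * ∫ s in Ioo 0 t, (1 / √(1 + s)) ^ 3 ≤ R ^ (a + 1) * 2 := by gcongr
  have c2 : R ^ 4 * ∫ s in Ioo 0 t, (1 / √(t - s)) ^ a ≤ 2 * R ^ (a + 1) := by
    calc R ^ 4 * ∫ s in Ioo 0 t, (1 / √(t - s)) ^ a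
        = R ^ 2 * (R ^ 2 * ∫ s in Ioo 0 t, (1 / √(t - s)) ^ a) := by ring
      _ ≤ R ^ 2 * (2 * R ^ a) := by gcongr
      _ = 2 * R ^ (a + 1) * R := by ring
      _ ≤ _ := mul_le_of_le_one_right (by positivity) hR1
  nlinarith

lemma measurable_cubicTerm (b : ℝ) {w₁ w₂ w₃ : ℝ → ℝ → ℂ}
    (m₁ : Measurable (Function.uncurry w₁)) (m₂ : Measurable (Function.uncurry w₂))
    (m₃ : Measurable (Function.uncurry w₃)) :
    Measurable fun p : ℝ × ℝ => cubicTerm (b * p.2) (w₁ p.2) (w₂ p.2) (w₃ p.2) p.1 := by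
  have hf : Measurable fun q : ((ℝ × ℝ) × ℝ) × ℝ => expc 0 (b * q.1.1.2 * q.2) *
      (w₁ q.1.1.2 (q.1.1.1 - q.1.2) * w₂ q.1.1.2 (q.1.2 - q.2) * w₃ q.1.1.2 q.2) := by
    have e0 := measurable_expc.comp (f := fun q : ((ℝ × ℝ) × ℝ) × ℝ =>
      ((0 : ℝ), b * q.1.1.2 * q.2)) (by fun_prop)
    have e1 := m₁.comp (f := fun q : ((ℝ × ℝ) × ℝ) × ℝ => (q.1.1.2, q.1.1.1 - q.1.2))
      (by fun_prop)
    have e2 := m₂.comp (f := fun q : ((ℝ × ℝ) × ℝ) × ℝ => (q.1.1.2, q.1.2 - q.2)) (by fun_prop)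
    have e3 := m₃.comp (f := fun q : ((ℝ × ℝ) × ℝ) × ℝ => (q.1.1.2, q.2)) (by fun_prop)
    exact e0.mul ((e1.mul e2).mul e3)
  exact hf.stronglyMeasurable.integral_prod_right'.integral_prod_right'.measurable

/-- The exponential damping factors out of the cubic term. -/
lemma integral_expc_mul_eq (x b s : ℝ) (f₁ f₂ f₃ : ℝ → ℂ) (k : ℝ) :
    ∫ ξ : ℝ, ∫ ζ : ℝ, expc x (b * ζ * s) * (f₁ (k - ξ) * f₂ (ξ - ζ) * f₃ ζ) =
      Real.exp x * cubicTerm (b * s) f₁ f₂ f₃ k := by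
  rw [cubicTerm, ← integral_const_mul]
  refine integral_congr_ae (Eventually.of_forall fun ξ => ?_)
  simp only
  rw [← integral_const_mul]
  refine integral_congr_ae (Eventually.of_forall fun ζ => ?_)
  simp only
  rw [expc_eq_mul, mul_assoc, show b * ζ * s = b * s * ζ by ring]

/-- Duhamel contribution of a cubic marginal mixed term `u_j u_l u_m` in which
two of the participating components have velocities differing by `b ≠ 0`: for `a ∈ {0,1}`,
`∫ |k|^a |∫_0^t ∫∫ e^{-dk²(t-s)+ibζs} w₁(k-ξ,s) w₂(ξ-ζ,s) w₃(ζ,s) dζ dξ ds| dk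
  ≤ C η³ (1+t)^{-(1+a)/2}`. -/
theorem cubic_marginal_mixed_term_estimate (d b : ℝ) (hd : 0 < d) (hb : b ≠ 0) :
    ∃ C : ℝ, 1 ≤ C ∧
      ∀ t : ℝ, 0 ≤ t → ∀ η : ℝ, 0 < η → η ≤ 1 →
        ∀ w₁ w₁' w₂ w₂' w₃ w₃' : ℝ → ℝ → ℂ,
          Measurable (Function.uncurry w₁) → Measurable (Function.uncurry w₁') →
          Measurable (Function.uncurry w₂) → Measurable (Function.uncurry w₂') →
          Measurable (Function.uncurry w₃) → Measurable (Function.uncurry w₃') →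
          (∀ s ∈ Set.Icc (0 : ℝ) t,
            HasWeakDeriv (w₁ s) (w₁' s) ∧ HasWeakDeriv (w₂ s) (w₂' s) ∧
            HasWeakDeriv (w₃ s) (w₃' s) ∧
            Integrable (w₁ s) ∧ Integrable (w₁' s) ∧
            Integrable (w₂ s) ∧ Integrable (w₂' s) ∧
            Integrable (w₃ s) ∧ Integrable (w₃' s) ∧
            (∫ k : ℝ, ‖w₁ s k‖) ≤ η * (1 + s) ^ (-(1 : ℝ) / 2) ∧
            (∫ k : ℝ, ‖w₂ s k‖) ≤ η * (1 + s) ^ (-(1 : ℝ) / 2) ∧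
            (∫ k : ℝ, ‖w₃ s k‖) ≤ η * (1 + s) ^ (-(1 : ℝ) / 2) ∧
            (∫ k : ℝ, ‖w₁' s k‖) ≤ η ∧
            (∫ k : ℝ, ‖w₂' s k‖) ≤ η ∧
            (∫ k : ℝ, ‖w₃' s k‖) ≤ η) →
          ∀ a : ℕ, a ≤ 1 →
            (∫ k : ℝ, |k| ^ a *
                ‖∫ s in (0 : ℝ)..t, ∫ ξ : ℝ, ∫ ζ : ℝ,
                    expc (-(d * k ^ 2 * (t - s))) (b * ζ * s) *
                      (w₁ s (k - ξ) * w₂ s (ξ - ζ) * w₃ s ζ)‖) ≤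
              C * η ^ 3 * (1 + t) ^ (-(1 + (a : ℝ)) / 2) := by
  set A := 2 + 2 * π / |b| with hAdef
  set D := (1 + 1 / √(d / 2)) * (1 + √(2 * π / d)) with hDdef
  have hA0 : 0 ≤ A := by positivity
  have hD0 : 0 ≤ D := by positivity
  have hD1 : 1 + 1 / √(d / 2) ≤ D :=
    le_mul_of_one_le_right (by positivity) (by linarith [Real.sqrt_nonneg (2 * π / d)])
  have hD2 : (1 + 1 / √(d / 2)) * √(2 * π / d) ≤ D := by
    rw [hDdef]; gcongr; linarith
  refine ⟨1 + 16 * D * A, by nlinarith [mul_nonneg hD0 hA0], ?_⟩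
  intro t ht η hη hη1 w₁ w₁' w₂ w₂' w₃ w₃' m₁ m₁' m₂ m₂' m₃ m₃' hw a ha
  have hR0 : 0 ≤ 1 / √(1 + t) := by positivity
  have hpow : (1 + t) ^ (-(1 + (a : ℝ)) / 2) = (1 / √(1 + t)) ^ (a + 1) := by
    rw [one_div, Real.sqrt_eq_rpow, ← Real.rpow_neg (by linarith), ← Real.rpow_natCast,
      ← Real.rpow_mul (by linarith)]
    congr 1
    push_cast
    ring
  have hslice : ∀ s ∈ Ioo 0 t,
      ∫⁻ k, ENNReal.ofReal (|k| ^ a * Real.exp (-(d * k ^ 2 * (t - s)))) *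
        ‖cubicTerm (b * s) (w₁ s) (w₂ s) (w₃ s) k‖ₑ ≤
      ENNReal.ofReal (4 * D * A * η ^ 3 * ((1 / √(1 + t)) ^ (a + 1) * (1 / √(1 + s)) ^ 3 +
        (1 / √(1 + t)) ^ 4 * (1 / √(t - s)) ^ a)) := by
    intro s hs
    obtain ⟨h₁, h₂, h₃, i₁, i₁', i₂, i₂', i₃, i₃', p₁, p₂, p₃, q₁, q₂, q₃⟩ :=
      hw s (Ioo_subset_Icc_self hs)
    have hr : (1 + s) ^ (-(1 : ℝ) / 2) = 1 / √(1 + s) := by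
      rw [one_div, Real.sqrt_eq_rpow, ← Real.rpow_neg (by linarith [hs.1])]
      congr 1
      ring
    rw [hr] at p₁ p₂ p₃
    obtain ⟨hL, hS⟩ := cubicTerm_decay hb hs.1.le hη.le m₁.of_uncurry_left m₂.of_uncurry_left
      m₃.of_uncurry_left h₁ h₂ h₃ i₁ i₁' i₂ i₂' i₃ i₃' p₁ p₂ p₃ q₁ q₂ q₃
    obtain ⟨g1, g2⟩ := lintegral_gaussian_weight_mul_le hd (sub_pos.2 hs.2) ha hL hS
    rcases min_kernel_bounds_le hs.1.le hs.2 ha with h | h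
    · refine g1.trans (ENNReal.ofReal_le_ofReal ?_)
      calc (1 + 1 / √(d / 2)) * (1 / √(t - s)) ^ a * (A * η ^ 3 * (1 / √(1 + s)) ^ 4)
          ≤ D * (1 / √(t - s)) ^ a * (A * η ^ 3 * (1 / √(1 + s)) ^ 4) := by gcongr
        _ = D * A * η ^ 3 * ((1 / √(t - s)) ^ a * (1 / √(1 + s)) ^ 4) := by ring
        _ ≤ D * A * η ^ 3 * _ := mul_le_mul_of_nonneg_left h (by positivity)
        _ = _ := by ring
    · refine g2.trans (ENNReal.ofReal_le_ofReal ?_)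
      calc (1 + 1 / √(d / 2)) * √(2 * π / d) * (1 / √(t - s)) ^ (a + 1) *
            (A * η ^ 3 * (1 / √(1 + s)) ^ 3)
          ≤ D * (1 / √(t - s)) ^ (a + 1) * (A * η ^ 3 * (1 / √(1 + s)) ^ 3) := by gcongr
        _ = D * A * η ^ 3 * ((1 / √(t - s)) ^ (a + 1) * (1 / √(1 + s)) ^ 3) := by ring
        _ ≤ D * A * η ^ 3 * _ := mul_le_mul_of_nonneg_left h (by positivity)
        _ = _ := by ring
  have hbound : ∫⁻ k, ‖|k| ^ a * ‖∫ s in (0 : ℝ)..t, ∫ ξ : ℝ, ∫ ζ : ℝ,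
        expc (-(d * k ^ 2 * (t - s))) (b * ζ * s) *
          (w₁ s (k - ξ) * w₂ s (ξ - ζ) * w₃ s ζ)‖‖ₑ ≤
      ENNReal.ofReal (16 * D * A * η ^ 3 * (1 / √(1 + t)) ^ (a + 1)) := by
    calc _ ≤ ∫⁻ k, ∫⁻ s in Ioo 0 t,
          ENNReal.ofReal (|k| ^ a * Real.exp (-(d * k ^ 2 * (t - s)))) *
            ‖cubicTerm (b * s) (w₁ s) (w₂ s) (w₃ s) k‖ₑ := by
          refine lintegral_mono fun k => ?_
          rw [enorm_mul, enorm_norm, intervalIntegral.integral_of_le ht,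
            integral_Ioc_eq_integral_Ioo]
          refine (mul_le_mul_right (enorm_integral_le_lintegral_enorm _) _).trans_eq ?_
          rw [← lintegral_const_mul' _ _ enorm_ne_top]
          refine lintegral_congr fun s => ?_
          rw [integral_expc_mul_eq, enorm_mul, ← mul_assoc, ENNReal.ofReal_mul (by positivity)]
          congr 2
          · exact Real.enorm_of_nonneg (by positivity)
          · rw [← ofReal_norm, Complex.norm_real, Real.norm_of_nonneg (Real.exp_pos _).le]
      _ = ∫⁻ s in Ioo 0 t, ∫⁻ k,
          ENNReal.ofReal (|k| ^ a * Real.exp (-(d * k ^ 2 * (t - s)))) *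
            ‖cubicTerm (b * s) (w₁ s) (w₂ s) (w₃ s) k‖ₑ := by
          refine lintegral_lintegral_swap (Measurable.aemeasurable ?_)
          exact Measurable.mul (by fun_prop) (measurable_cubicTerm b m₁ m₂ m₃).enorm
      _ ≤ ∫⁻ s in Ioo 0 t, _ := setLIntegral_mono' measurableSet_Ioo hslice
      _ ≤ _ := (lintegral_majorant_le ht (by positivity) ha).trans_eq (by congr 1; ring)
  rw [hpow]
  refine le_trans ?_ (show 16 * D * A * η ^ 3 * (1 / √(1 + t)) ^ (a + 1) ≤ _ from ?_)
  · rw [← ENNReal.ofReal_le_ofReal_iff (by positivity)]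
    exact (ENNReal.ofReal_le_ofReal (le_abs_self _)).trans
      ((Real.enorm_eq_ofReal_abs _).symm.trans_le
        ((enorm_integral_le_lintegral_enorm _).trans hbound))
  · gcongr
    linarith
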